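/- Let p ∈ (0,1) be fixed with p ≤ 1 − 1/∛7, and let s be the minimum positive integer such that (2s²+1)(1−p)^s < 1. Then with high probability sat(G(n,p), C_4) ≤ ((s+1)/2 + s(1−p)^s + s(1−p)^{2s}/(1−(1−p)^s))·n·(1+o(1)). -/

import Mathlib

open MeasureTheory Filter Real

/-- The index type of potential edges of a graph on `Fin n`. -/
abbrev EdgeType (n : ℕ) := {e : Sym2 (Fin n) // ¬ e.IsDiag}

/-- The product Bernoulli measure on edge-indicator functions: the binomial
random graph `G(n,p)`. -/
noncomputable def erMeasure (n : ℕ) (p : ℝ) : Measure (EdgeType n → Bool) :=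
  Measure.pi fun _ => (PMF.bernoulli (min (Real.toNNReal p) 1) (min_le_right _ _)).toMeasure

/-- The simple graph determined by an edge-indicator function. -/
def graphOf {n : ℕ} (ω : EdgeType n → Bool) : SimpleGraph (Fin n) :=
  SimpleGraph.fromEdgeSet {e | ∃ h : ¬ e.IsDiag, ω ⟨e, h⟩ = true}

/-- `H` contains a (not necessarily induced) copy of `F`. -/
def ContainsCopy {α β : Type*} (F : SimpleGraph α) (H : SimpleGraph β) : Prop :=
  ∃ f : α → β, Function.Injective f ∧ ∀ ⦃a b⦄, F.Adj a b → H.Adj (f a) (f b)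

/-- `H` is `F`-saturated in `G`: `H` is a spanning subgraph of `G` that is `F`-free,
and adding any edge of `G` missing from `H` creates a copy of `F`. -/
def IsSaturatedIn {V : Type*} {α : Type*} (G H : SimpleGraph V) (F : SimpleGraph α) : Prop :=
  H ≤ G ∧ ¬ ContainsCopy F H ∧
    ∀ v w : V, G.Adj v w → ¬ H.Adj v w →
      ContainsCopy F (H ⊔ SimpleGraph.fromEdgeSet {s(v, w)})

/-- The saturation number `sat(G,F)`: the minimum number of edges of an
`F`-saturated spanning subgraph of `G`. -/
noncomputable def satNum {V α : Type*} (G : SimpleGraph V) (F : SimpleGraph α) : ℕ :=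
  sInf {k | ∃ H : SimpleGraph V, IsSaturatedIn G H F ∧ H.edgeSet.ncard = k}

/-- The cycle `C_m`, as a graph on `ZMod m`. -/
def cycGraph (m : ℕ) : SimpleGraph (ZMod m) :=
  SimpleGraph.fromRel (fun a b => a = b + 1)

/-!
Fix `K` of order `n ^ (1 / 4)` vertices, the hubs, and join every other vertex `x` to its first
neighbour among them, of index `T x` say. This star forest contains no `C₄`, so it extends to a
`C₄`-saturated subgraph `H` of `G(n,p)`. Two neighbours of a vertex `v` joined to the same hub close
a 4-cycle in `H` unless `v` is that hub, so a non-hub has at most `i + 1` neighbours joined to one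
of the first `i + 1` hubs. Charging each edge between non-hubs to its endpoint with the larger index
bounds the number of edges of `H` by `∑ x, (T x + 2) + 2 * K ^ 2`. The `T x` are independent
truncated geometric variables of mean at most `1 / p - 1`, so by Chebyshev's inequality the
saturation number is whp at most `(1 + 1 / p + o(1)) n`. Finally `1 + 1 / p < (s + 1) / 2` in the
range of `p` considered.
-/

section

open Finset ProbabilityTheory

lemma containsCopy_cycGraph_four_iff {V : Type*} {H : SimpleGraph V} :
    ContainsCopy (cycGraph 4) H ↔ ∃ u v, u ≠ v ∧ (H.commonNeighbors u v).Nontrivial := by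
  constructor
  · rintro ⟨f, hf, hadj⟩
    have hstep (x : ZMod 4) : H.Adj (f x) (f (x + 1)) := by
      refine hadj ?_
      rw [cycGraph, SimpleGraph.fromRel_adj]
      exact ⟨by revert x; decide, Or.inr rfl⟩
    refine ⟨f 0, f 2, hf.ne (by decide), f 1, ⟨hstep 0, (hstep 1).symm⟩, f 3, ⟨?_, hstep 2⟩,
      hf.ne (by decide)⟩
    exact (hstep 3).symm
  · rintro ⟨u, v, huv, y, ⟨huy, hvy⟩, z, ⟨huz, hvz⟩, hyz⟩
    have hadj (i : Fin 4) : H.Adj (![u, y, v, z] i) (![u, y, v, z] (i + 1)) := by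
      fin_cases i
      exacts [huy, hvy.symm, hvz, huz.symm]
    refine ⟨(![u, y, v, z] : Fin 4 → V), ?_, fun a b hab => ?_⟩
    · intro (i : Fin 4) (j : Fin 4) hij
      have := huy.ne
      have := hvy.ne
      have := huz.ne
      have := hvz.ne
      fin_cases i <;> fin_cases j <;> simp_all <;> rfl
    · obtain ⟨-, rfl | rfl⟩ := (SimpleGraph.fromRel_adj ..).1 hab
      exacts [(hadj _).symm, hadj _]

lemma not_containsCopy_cycGraph_four_iff {V : Type*} {H : SimpleGraph V} :
    ¬ ContainsCopy (cycGraph 4) H ↔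
      ∀ ⦃u v⦄, u ≠ v → (H.commonNeighbors u v).Subsingleton := by
  simp only [containsCopy_cycGraph_four_iff, not_exists, not_and, Set.not_nontrivial_iff]

lemma exists_isSaturatedIn_ge {V α : Type*} [Finite V] {G S : SimpleGraph V}
    {F : SimpleGraph α} (hSG : S ≤ G) (hS : ¬ ContainsCopy F S) :
    ∃ H, S ≤ H ∧ IsSaturatedIn G H F := by
  obtain ⟨H, hSH, hmax⟩ :=
    (Set.toFinite {H : SimpleGraph V | H ≤ G ∧ ¬ ContainsCopy F H}).exists_le_maximal ⟨hSG, hS⟩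
  refine ⟨H, hSH, hmax.prop.1, hmax.prop.2, fun v w hvw hnot => ?_⟩
  by_contra hfree
  have hle : H ⊔ SimpleGraph.fromEdgeSet {s(v, w)} ≤ G := by
    refine sup_le hmax.prop.1 fun a b hab => ?_
    rw [← SimpleGraph.mem_edgeSet, hab.1]
    exact hvw
  exact hnot (hmax.le_of_ge ⟨hle, hfree⟩ le_sup_left (Or.inr ⟨rfl, hvw.ne⟩))

lemma ncard_edgeSet_le_sum_card {V : Type*} [Fintype V] (H : SimpleGraph V)
    (out : V → Finset V) (hout : ∀ v w, H.Adj v w → w ∈ out v ∨ v ∈ out w) :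
    H.edgeSet.ncard ≤ ∑ v, #(out v) := by
  classical
  have hsub : H.edgeSet ⊆ (univ.sigma out).image fun e => s(e.1, e.2) := by
    intro e
    induction e with | _ v w
    intro hvw
    rw [coe_image]
    rcases hout v w hvw with hw | hv
    · exact ⟨⟨v, w⟩, by simpa using hw, rfl⟩
    · exact ⟨⟨w, v⟩, by simpa using hv, Sym2.eq_swap⟩
  calc H.edgeSet.ncard
      ≤ #((univ.sigma out).image fun e => s(e.1, e.2)) := by
        simpa only [Set.ncard_coe_finset] using Set.ncard_le_ncard hsub
    _ ≤ #(univ.sigma out) := card_image_le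
    _ = ∑ v, #(out v) := card_sigma ..

section Hubs

variable {V : Type*} {K : ℕ} {c : Fin K → V} {G H : SimpleGraph V}

/-- The vertices that are not one of the hubs `c 0, …, c (K - 1)`. -/
abbrev NonHub (c : Fin K → V) := {x : V // x ∉ Set.range c}

variable {T : NonHub c → Fin K}

/-- `T` assigns to every non-hub `x` the index of a hub adjacent to `x` in `G`. -/
def IsHubAssignment (G : SimpleGraph V) (c : Fin K → V) (T : NonHub c → Fin K) : Prop :=
  ∀ x : NonHub c, G.Adj x (c (T x))

/-- The star forest joining every non-hub `x` to its assigned hub `c (T x)`. -/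
def hubForest (c : Fin K → V) (T : NonHub c → Fin K) : SimpleGraph V :=
  SimpleGraph.fromRel fun v w => ∃ x : NonHub c, v = x ∧ w = c (T x)

lemma hubForest_le_iff : hubForest c T ≤ G ↔ IsHubAssignment G c T := by
  refine ⟨fun hle x => hle ?_, fun hT v w hvw => ?_⟩
  · rw [hubForest, SimpleGraph.fromRel_adj]
    exact ⟨fun h => x.2 ⟨T x, h.symm⟩, Or.inl ⟨x, rfl, rfl⟩⟩
  · obtain ⟨-, ⟨x, rfl, rfl⟩ | ⟨x, rfl, rfl⟩⟩ := (SimpleGraph.fromRel_adj ..).1 hvw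
    exacts [hT x, (hT x).symm]

lemma eq_hub_of_hubForest_adj {x : NonHub c} {v : V} (h : (hubForest c T).Adj x v) :
    v = c (T x) := by
  obtain ⟨-, ⟨y, hy, rfl⟩ | ⟨y, -, hx⟩⟩ := (SimpleGraph.fromRel_adj ..).1 h
  · rw [Subtype.ext hy]
  · exact (x.2 ⟨T y, hx.symm⟩).elim

lemma notMem_range_of_hubForest_adj {v w : V} (h : (hubForest c T).Adj v w)
    (hv : v ∈ Set.range c) : w ∉ Set.range c := by
  obtain ⟨-, ⟨x, rfl, -⟩ | ⟨x, rfl, -⟩⟩ := (SimpleGraph.fromRel_adj ..).1 h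
  exacts [(x.2 hv).elim, x.2]

lemma hubForest_not_containsCopy : ¬ ContainsCopy (cycGraph 4) (hubForest c T) := by
  refine not_containsCopy_cycGraph_four_iff.2 fun u v huv y ⟨huy, hvy⟩ z ⟨huz, _⟩ => ?_
  by_cases hu : u ∈ Set.range c
  · have hy := notMem_range_of_hubForest_adj huy hu
    exact (huv ((eq_hub_of_hubForest_adj (x := ⟨y, hy⟩) huy.symm).trans
      (eq_hub_of_hubForest_adj (x := ⟨y, hy⟩) hvy.symm).symm)).elim
  · exact (eq_hub_of_hubForest_adj (x := ⟨u, hu⟩) huy).trans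
      (eq_hub_of_hubForest_adj (x := ⟨u, hu⟩) huz).symm

variable [Fintype V] [DecidableEq V]

open scoped Classical in
/-- The non-hub neighbours of `v` in `H` whose assigned hub is not `v` itself. -/
noncomputable def crossNeighbors (H : SimpleGraph V) (T : NonHub c → Fin K) (v : V) :
    Finset (NonHub c) :=
  {y | H.Adj v y ∧ v ≠ c (T y)}

lemma mem_crossNeighbors {v : V} {y : NonHub c} :
    y ∈ crossNeighbors H T v ↔ H.Adj v y ∧ v ≠ c (T y) := by
  simp only [crossNeighbors, mem_filter, mem_univ, true_and]

lemma injOn_crossNeighbors (hT : IsHubAssignment H c T) (hH : ¬ ContainsCopy (cycGraph 4) H)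
    (v : V) : Set.InjOn T (crossNeighbors H T v) := by
  intro y hy z hz hyz
  rw [mem_coe, mem_crossNeighbors] at hy hz
  have hz' : H.Adj (c (T y)) z := hyz ▸ (hT z).symm
  exact Subtype.ext <| not_containsCopy_cycGraph_four_iff.1 hH hy.2
    ⟨hy.1, (hT y).symm⟩ ⟨hz.1, hz'⟩

/-- The neighbours of `v` whose edge to `v` is charged to `v`: a hub pays for all hubs and all its
cross neighbours, a non-hub for its hub and for the cross neighbours of at most its own index. -/
noncomputable def chargedNeighbors (H : SimpleGraph V) (T : NonHub c → Fin K) (v : V) :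
    Finset V :=
  if hv : v ∈ Set.range c then
    univ.image c ∪ (crossNeighbors H T v).image Subtype.val
  else
    insert (c (T ⟨v, hv⟩)) (((crossNeighbors H T v).filter (T · ≤ T ⟨v, hv⟩)).image Subtype.val)

lemma mem_chargedNeighbors_hub {v w : V} (hv : v ∈ Set.range c) :
    w ∈ chargedNeighbors H T v ↔
      w ∈ Set.range c ∨ ∃ y ∈ crossNeighbors H T v, (y : V) = w := by
  rw [chargedNeighbors, dif_pos hv]
  simp only [mem_union, mem_image, mem_univ, true_and, Set.mem_range]

lemma mem_chargedNeighbors_nonHub {x : NonHub c} {w : V} :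
    w ∈ chargedNeighbors H T x ↔
      w = c (T x) ∨ ∃ y : NonHub c, (y ∈ crossNeighbors H T x ∧ T y ≤ T x) ∧ (y : V) = w := by
  simp only [chargedNeighbors, dif_neg x.2, mem_insert, mem_image, mem_filter]

lemma mem_chargedNeighbors_or_of_hub_nonHub {v : V} {y : NonHub c} (hv : v ∈ Set.range c)
    (h : H.Adj v y) : (y : V) ∈ chargedNeighbors H T v ∨ v ∈ chargedNeighbors H T y := by
  rw [mem_chargedNeighbors_hub hv, mem_chargedNeighbors_nonHub]
  by_cases hvy : v = c (T y)
  · exact Or.inr (Or.inl hvy)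
  · exact Or.inl (Or.inr ⟨y, mem_crossNeighbors.2 ⟨h, hvy⟩, rfl⟩)

lemma mem_chargedNeighbors_nonHub_of_le {x y : NonHub c} (h : H.Adj x y) (hle : T y ≤ T x) :
    (y : V) ∈ chargedNeighbors H T x :=
  mem_chargedNeighbors_nonHub.2 <| Or.inr
    ⟨y, ⟨mem_crossNeighbors.2 ⟨h, fun hx => x.2 ⟨T y, hx.symm⟩⟩, hle⟩, rfl⟩

lemma mem_chargedNeighbors_or_of_adj {v w : V} (h : H.Adj v w) :
    w ∈ chargedNeighbors H T v ∨ v ∈ chargedNeighbors H T w := by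
  by_cases hv : v ∈ Set.range c <;> by_cases hw : w ∈ Set.range c
  · exact Or.inl ((mem_chargedNeighbors_hub hv).2 (Or.inl hw))
  · exact mem_chargedNeighbors_or_of_hub_nonHub (y := ⟨w, hw⟩) hv h
  · exact (mem_chargedNeighbors_or_of_hub_nonHub (y := ⟨v, hv⟩) hw h.symm).symm
  · exact (le_total (T ⟨w, hw⟩) (T ⟨v, hv⟩)).imp (mem_chargedNeighbors_nonHub_of_le h)
      (mem_chargedNeighbors_nonHub_of_le h.symm)

lemma card_chargedNeighbors_hub_le (hT : IsHubAssignment H c T)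
    (hH : ¬ ContainsCopy (cycGraph 4) H) {v : V} (hv : v ∈ Set.range c) :
    #(chargedNeighbors H T v) ≤ 2 * K := by
  have hcross : #(crossNeighbors H T v) ≤ K := by
    simpa using card_le_card_of_injOn T (t := univ) (by simp) (injOn_crossNeighbors hT hH v)
  rw [chargedNeighbors, dif_pos hv, two_mul]
  exact (card_union_le ..).trans
    (add_le_add (card_image_le.trans_eq (card_fin K)) (card_image_le.trans hcross))

lemma card_chargedNeighbors_nonHub_le (hT : IsHubAssignment H c T)
    (hH : ¬ ContainsCopy (cycGraph 4) H) (x : NonHub c) :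
    #(chargedNeighbors H T x) ≤ T x + 2 := by
  have hcross : #((crossNeighbors H T x).filter (T · ≤ T x)) ≤ T x + 1 := by
    rw [← Fin.card_Iic]
    exact card_le_card_of_injOn T (fun y hy => by simpa using (mem_filter.1 hy).2)
      ((injOn_crossNeighbors hT hH x).mono (coe_subset.2 (filter_subset ..)))
  rw [chargedNeighbors, dif_neg x.2]
  exact (card_insert_le ..).trans (Nat.succ_le_succ (card_image_le.trans hcross))

lemma ncard_edgeSet_le_of_isHubAssignment (hT : IsHubAssignment H c T)
    (hH : ¬ ContainsCopy (cycGraph 4) H) :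
    H.edgeSet.ncard ≤ ∑ x, ((T x : ℕ) + 2) + 2 * K ^ 2 := by
  have hhubs : Fintype.card {v // v ∈ Set.range c} ≤ K :=
    (Fintype.card_range_le c).trans_eq (Fintype.card_fin K)
  calc H.edgeSet.ncard
      ≤ ∑ v, #(chargedNeighbors H T v) :=
        ncard_edgeSet_le_sum_card H _ fun _ _ => mem_chargedNeighbors_or_of_adj
    _ = ∑ v : {v // v ∈ Set.range c}, #(chargedNeighbors H T v)
          + ∑ x : NonHub c, #(chargedNeighbors H T x) := by
        convert (Fintype.sum_subtype_add_sum_subtype (· ∈ Set.range c) _).symm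
    _ ≤ ∑ _v : {v // v ∈ Set.range c}, 2 * K + ∑ x, ((T x : ℕ) + 2) :=
        add_le_add (sum_le_sum fun v _ => card_chargedNeighbors_hub_le hT hH v.2)
          (sum_le_sum fun x _ => card_chargedNeighbors_nonHub_le hT hH x)
    _ ≤ K * (2 * K) + ∑ x, ((T x : ℕ) + 2) := by
        rw [sum_const, smul_eq_mul, card_univ]
        gcongr
    _ = ∑ x, ((T x : ℕ) + 2) + 2 * K ^ 2 := by ring

theorem satNum_cycGraph_four_le_of_isHubAssignment (hT : IsHubAssignment G c T) :
    satNum G (cycGraph 4) ≤ ∑ x, ((T x : ℕ) + 2) + 2 * K ^ 2 := by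
  obtain ⟨H, hle, hH⟩ :=
    exists_isSaturatedIn_ge (hubForest_le_iff.2 hT) hubForest_not_containsCopy
  calc satNum G (cycGraph 4) ≤ H.edgeSet.ncard := Nat.sInf_le ⟨H, hH, rfl⟩
    _ ≤ _ := ncard_edgeSet_le_of_isHubAssignment (hubForest_le_iff.1 hle) hH.2.1

end Hubs

lemma measureReal_card_mul_add_le_sum_le {κ Ω : Type*} [Fintype κ] [MeasurableSpace Ω]
    {μ : Measure Ω} [IsProbabilityMeasure μ] {Y : κ → Ω → ℝ} {a b m t : ℝ}
    (hY : ∀ x, AEMeasurable (Y x) μ) (hab : ∀ x, ∀ᵐ ω ∂μ, Y x ω ∈ Set.Icc a b)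
    (hind : Pairwise fun x y => Y x ⟂ᵢ[μ] Y y) (hmean : ∀ x, ∫ ω, Y x ω ∂μ ≤ m) (ht : 0 < t) :
    μ.real {ω | Fintype.card κ * m + t ≤ ∑ x, Y x ω}
      ≤ Fintype.card κ * ((b - a) / 2) ^ 2 / t ^ 2 := by
  have hmem (x : κ) : MemLp (Y x) 2 μ := memLp_of_bounded (hab x) (hY x).aestronglyMeasurable 2
  have hmeanSum : μ[∑ x, Y x] ≤ Fintype.card κ * m := by
    simp only [Finset.sum_apply]
    rw [integral_finsetSum _ fun x _ => (hmem x).integrable one_le_two, ← card_univ,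
      ← nsmul_eq_mul]
    exact sum_le_card_nsmul _ _ _ fun x _ => hmean x
  have hvar : Var[∑ x, Y x; μ] ≤ Fintype.card κ * ((b - a) / 2) ^ 2 := by
    rw [IndepFun.variance_sum (fun x _ => hmem x) fun x _ y _ hxy => hind hxy, ← card_univ,
      ← nsmul_eq_mul]
    exact sum_le_card_nsmul _ _ _ fun x _ => variance_le_sq_of_bounded (hab x) (hY x)
  have hsub : {ω | Fintype.card κ * m + t ≤ ∑ x, Y x ω}
      ⊆ {ω | t ≤ |(∑ x, Y x) ω - μ[∑ x, Y x]|} := fun ω hω => by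
    rw [Set.mem_ofPred_eq] at hω ⊢
    rw [Finset.sum_apply]
    exact le_trans (by linarith) (le_abs_self _)
  calc μ.real {ω | Fintype.card κ * m + t ≤ ∑ x, Y x ω}
      ≤ μ.real {ω | t ≤ |(∑ x, Y x) ω - μ[∑ x, Y x]|} := measureReal_mono hsub
    _ ≤ Var[∑ x, Y x; μ] / t ^ 2 :=
        ENNReal.toReal_le_of_le_ofReal (div_nonneg (variance_nonneg _ _) (sq_nonneg t))
          (meas_ge_le_variance_div_sq (memLp_finsetSum' _ fun x _ => hmem x) ht)
    _ ≤ Fintype.card κ * ((b - a) / 2) ^ 2 / t ^ 2 := by gcongr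

lemma tendsto_measure_one_of_tendsto_measureReal_compl {ι : Type*} {l : Filter ι}
    {Ω : ι → Type*} [∀ i, MeasurableSpace (Ω i)] {μ : ∀ i, Measure (Ω i)}
    [∀ i, IsProbabilityMeasure (μ i)] {A : ∀ i, Set (Ω i)} (hA : ∀ i, MeasurableSet (A i))
    (h : Tendsto (fun i => (μ i).real (A i)ᶜ) l (nhds 0)) :
    Tendsto (fun i => μ i (A i)) l (nhds 1) := by
  have hcompl (i : ι) : (μ i).real (A i) = 1 - (μ i).real (A i)ᶜ := by
    rw [probReal_compl_eq_one_sub (hA i), sub_sub_cancel]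
  have hreal : Tendsto (fun i => (μ i).real (A i)) l (nhds 1) := by
    simpa only [hcompl, sub_zero] using tendsto_const_nhds.sub h
  exact (ENNReal.tendsto_toReal_iff (fun _ => measure_ne_top _ _) ENNReal.one_ne_top).1 hreal

/-- The number of `false` entries of `b` preceding its first `true` entry; it is `K` if there is no
`true` entry. -/
def leadingFalse {K : ℕ} (b : Fin K → Bool) : ℕ := #{j | ∀ i ≤ j, b i = false}

lemma leadingFalse_le {K : ℕ} (b : Fin K → Bool) : leadingFalse b ≤ K :=
  (card_filter_le _ _).trans_eq (card_fin K)

lemma exists_leadingFalse_eq {K : ℕ} {b : Fin K → Bool} (h : ∃ i, b i = true) :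
    ∃ m : Fin K, b m = true ∧ leadingFalse b = m := by
  refine ⟨Fin.find _ h, Fin.find_spec h, ?_⟩
  rw [leadingFalse, ← Fin.card_Iio]
  congr 1
  ext j
  simp only [mem_filter, mem_univ, true_and, mem_Iio, Fin.lt_find_iff, Bool.not_eq_true]

section Coins

variable {Ω ι κ : Type*} [MeasurableSpace Ω] {μ : Measure Ω} {K : ℕ} {q : ℝ}

lemma measureReal_forall_mem_eq_false {X : ι → Ω → Bool} (hX : iIndepFun X μ)
    (hq : ∀ i, μ.real {ω | X i ω = false} = q) (s : Finset ι) :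
    μ.real {ω | ∀ i ∈ s, X i ω = false} = q ^ #s := by
  have hinter : {ω | ∀ i ∈ s, X i ω = false} = ⋂ i ∈ s, X i ⁻¹' {false} := by
    ext ω
    simp only [Set.mem_ofPred_eq, Set.mem_iInter, Set.mem_preimage, Set.mem_singleton_iff]
  rw [hinter, measureReal_def,
    hX.measure_inter_preimage_eq_mul s fun _ _ => MeasurableSet.singleton false,
    ENNReal.toReal_prod]
  exact prod_eq_pow_card fun i _ => hq i

lemma measureReal_exists_forall_eq_false_le [Fintype κ] {X : κ × Fin K → Ω → Bool}
    (hX : iIndepFun X μ) (hq : ∀ z, μ.real {ω | X z ω = false} = q) :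
    μ.real {ω | ∃ x, ∀ i, X (x, i) ω = false} ≤ Fintype.card κ * q ^ K := by
  have hrow (x : κ) : μ.real {ω | ∀ i, X (x, i) ω = false} = q ^ K := by
    simpa using measureReal_forall_mem_eq_false
      (hX.precomp (Prod.mk_right_injective x)) (fun i => hq (x, i)) univ
  calc μ.real {ω | ∃ x, ∀ i, X (x, i) ω = false}
      ≤ ∑ x, μ.real {ω | ∀ i, X (x, i) ω = false} := by
        simpa only [Set.ofPred_exists] using measureReal_iUnion_fintype_le _
    _ = Fintype.card κ * q ^ K := by
        simp only [hrow, sum_const, card_univ, nsmul_eq_mul]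

lemma indepFun_rows [Finite ι] {β : Type*} [MeasurableSpace β] {X : κ × ι → Ω → β}
    (hX : iIndepFun X μ) (hXm : ∀ z, Measurable (X z)) {x y : κ} (hxy : x ≠ y) :
    (fun ω i => X (x, i) ω) ⟂ᵢ[μ] (fun ω i => X (y, i) ω) := by
  have := Fintype.ofFinite ι
  have hdisj : Disjoint ({x} ×ˢ univ : Finset (κ × ι)) ({y} ×ˢ univ) :=
    disjoint_product.2 (Or.inl (disjoint_singleton.2 hxy))
  exact (hX.indepFun_finset _ _ hdisj hXm).comp
    (φ := fun f i => f ⟨(x, i), by simp⟩) (ψ := fun f i => f ⟨(y, i), by simp⟩)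
    (measurable_pi_lambda _ fun _ => measurable_pi_apply _)
    (measurable_pi_lambda _ fun _ => measurable_pi_apply _)

variable [IsProbabilityMeasure μ]

lemma integral_leadingFalse_le {X : Fin K → Ω → Bool} (hX : iIndepFun X μ)
    (hXm : ∀ i, Measurable (X i)) (hq : ∀ i, μ.real {ω | X i ω = false} = q) (hq0 : 0 ≤ q)
    (hq1 : q < 1) : ∫ ω, (leadingFalse fun i => X i ω : ℝ) ∂μ ≤ q / (1 - q) := by
  let A (j : Fin K) : Set Ω := {ω | ∀ i ∈ Iic j, X i ω = false}
  have hA (j : Fin K) : MeasurableSet (A j) := by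
    simp only [A, Set.ofPred_forall]
    exact Finset.measurableSet_biInter _ fun i _ => hXm i (MeasurableSet.singleton false)
  have hsum (ω : Ω) : (leadingFalse fun i => X i ω : ℝ) = ∑ j, (A j).indicator 1 ω := by
    classical
    simp [leadingFalse, A, Set.indicator_apply]
  calc ∫ ω, (leadingFalse fun i => X i ω : ℝ) ∂μ
      = ∑ j, μ.real (A j) := by
        simp only [hsum]
        rw [integral_finsetSum _ fun j _ => (integrable_const 1).indicator (hA j)]
        exact sum_congr rfl fun j _ => integral_indicator_one (hA j)
    _ = ∑ j ∈ range K, q ^ j * q := by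
        rw [← Fin.sum_univ_eq_sum_range fun j => q ^ j * q]
        refine sum_congr rfl fun j _ => ?_
        rw [measureReal_forall_mem_eq_false hX hq, Fin.card_Iic, pow_succ]
    _ ≤ (∑' j, q ^ j) * q := by
        rw [← sum_mul]
        gcongr
        exact (summable_geometric_of_lt_one hq0 hq1).sum_le_tsum _ fun j _ => pow_nonneg hq0 j
    _ = q / (1 - q) := by rw [tsum_geometric_of_lt_one hq0 hq1, inv_mul_eq_div]

lemma measureReal_sum_leadingFalse_ge_le [Fintype κ] {X : κ × Fin K → Ω → Bool}
    (hX : iIndepFun X μ) (hXm : ∀ z, Measurable (X z))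
    (hq : ∀ z, μ.real {ω | X z ω = false} = q) (hq0 : 0 ≤ q) (hq1 : q < 1) {t : ℝ} (ht : 0 < t) :
    μ.real {ω | Fintype.card κ * (q / (1 - q)) + t ≤ ∑ x, (leadingFalse fun i => X (x, i) ω : ℝ)}
      ≤ Fintype.card κ * (K / 2) ^ 2 / t ^ 2 := by
  have hlead : Measurable fun b : Fin K → Bool => (leadingFalse b : ℝ) := measurable_of_finite _
  have hbound := measureReal_card_mul_add_le_sum_le (μ := μ) (a := 0) (b := K)
    (Y := fun x ω => (leadingFalse fun i => X (x, i) ω : ℝ))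
    (fun x => (hlead.comp (measurable_pi_lambda _ fun i => hXm (x, i))).aemeasurable)
    (fun x => ae_of_all _ fun ω => ⟨Nat.cast_nonneg _, Nat.cast_le.2 (leadingFalse_le _)⟩)
    (fun x y hxy => (indepFun_rows hX hXm hxy).comp hlead hlead)
    (fun x => integral_leadingFalse_le (hX.precomp (Prod.mk_right_injective x))
      (fun i => hXm (x, i)) (fun i => hq (x, i)) hq0 hq1) ht
  simpa only [sub_zero] using hbound

end Coins

section RandomGraph

variable {n K : ℕ} {p : ℝ} {c : Fin K → Fin n}

instance : IsProbabilityMeasure (erMeasure n p) := by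
  unfold erMeasure
  infer_instance

lemma iIndepFun_edgeIndicator : iIndepFun (fun (e : EdgeType n) ω => ω e) (erMeasure n p) :=
  iIndepFun_pi fun _ => aemeasurable_id

lemma erMeasure_real_eq_false (hp0 : 0 ≤ p) (hp1 : p ≤ 1) (e : EdgeType n) :
    (erMeasure n p).real {ω | ω e = false} = 1 - p := by
  have hp : p.toNNReal ≤ 1 := Real.toNNReal_le_one.2 hp1
  have hpre : {ω : EdgeType n → Bool | ω e = false}
      = Function.eval (β := fun _ => Bool) e ⁻¹' {false} := rfl
  rw [hpre, erMeasure, (measurePreserving_eval _ e).measureReal_preimage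
    (MeasurableSet.singleton false).nullMeasurableSet, measureReal_def,
    PMF.toMeasure_apply_singleton _ _ (MeasurableSet.singleton false)]
  change ((1 - min p.toNNReal 1 : NNReal) : ENNReal).toReal = 1 - p
  rw [min_eq_left hp, ENNReal.coe_toReal, NNReal.coe_sub hp, NNReal.coe_one,
    Real.coe_toNNReal p hp0]

lemma card_nonHub_le (c : Fin K → Fin n) : Fintype.card (NonHub c) ≤ n :=
  (Fintype.card_subtype_le (· ∉ Set.range c)).trans_eq (Fintype.card_fin n)

/-- The potential edge joining the non-hub `z.1` to the hub `c z.2`. -/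
def hubEdge (c : Fin K → Fin n) (z : NonHub c × Fin K) : EdgeType n :=
  ⟨s(z.1, c z.2), fun h => z.1.2 ⟨z.2, (Sym2.mk_isDiag_iff.1 h).symm⟩⟩

lemma hubEdge_injective (hc : Function.Injective c) : Function.Injective (hubEdge c) := by
  rintro ⟨x, i⟩ ⟨y, j⟩ h
  obtain ⟨hxy, hij⟩ | ⟨hxj, -⟩ := Sym2.eq_iff.1 (congrArg Subtype.val h)
  · exact Prod.ext (Subtype.ext hxy) (hc hij)
  · exact (x.2 ⟨j, hxj.symm⟩).elim

lemma graphOf_adj_hub_of_eq_true {ω : EdgeType n → Bool} {x : NonHub c} {i : Fin K}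
    (h : ω (hubEdge c (x, i)) = true) : (graphOf ω).Adj x (c i) := by
  rw [graphOf, SimpleGraph.fromEdgeSet_adj]
  exact ⟨⟨_, h⟩, fun hx => x.2 ⟨i, hx.symm⟩⟩

lemma satNum_graphOf_le_sum_leadingFalse {ω : EdgeType n → Bool}
    (h : ∀ x : NonHub c, ∃ i, ω (hubEdge c (x, i)) = true) :
    satNum (graphOf ω) (cycGraph 4)
      ≤ ∑ x, (leadingFalse (fun i => ω (hubEdge c (x, i))) + 2) + 2 * K ^ 2 := by
  choose T hTtrue hTlead using fun x => exists_leadingFalse_eq (h x)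
  simp only [hTlead]
  exact satNum_cycGraph_four_le_of_isHubAssignment fun x => graphOf_adj_hub_of_eq_true (hTtrue x)

lemma satNum_graphOf_le_of_sum_leadingFalse_le (hp0 : 0 < p) {t : ℝ} {ω : EdgeType n → Bool}
    (htrue : ∀ x : NonHub c, ∃ i, ω (hubEdge c (x, i)) = true)
    (hsum : ∑ x, (leadingFalse fun i => ω (hubEdge c (x, i)) : ℝ)
      ≤ Fintype.card (NonHub c) * ((1 - p) / (1 - (1 - p))) + t) :
    (satNum (graphOf ω) (cycGraph 4) : ℝ) ≤ (1 + 1 / p) * n + t + 2 * K ^ 2 := by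
  have hsat : (satNum (graphOf ω) (cycGraph 4) : ℝ)
      ≤ ∑ x, (leadingFalse fun i => ω (hubEdge c (x, i)) : ℝ)
        + Fintype.card (NonHub c) * 2 + 2 * K ^ 2 := by
    have hnat := satNum_graphOf_le_sum_leadingFalse htrue
    rw [sum_add_distrib, sum_const, card_univ, smul_eq_mul] at hnat
    exact_mod_cast hnat
  have hmean : Fintype.card (NonHub c) * ((1 - p) / (1 - (1 - p))) + Fintype.card (NonHub c) * 2
      ≤ (1 + 1 / p) * n := by
    calc _ = (1 + 1 / p) * Fintype.card (NonHub c) := by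
          rw [sub_sub_cancel]
          field_simp
          ring
      _ ≤ (1 + 1 / p) * n := by
          gcongr
          exact card_nonHub_le c
  linarith

theorem erMeasure_real_lt_satNum_cycGraph_four_le (hp0 : 0 < p) (hp1 : p ≤ 1) (hKn : K ≤ n)
    {t : ℝ} (ht : 0 < t) :
    (erMeasure n p).real {ω | (1 + 1 / p) * n + t + 2 * K ^ 2 < satNum (graphOf ω) (cycGraph 4)}
      ≤ n * (1 - p) ^ K + n * (K / 2) ^ 2 / t ^ 2 := by
  have hq0 : 0 ≤ 1 - p := sub_nonneg.2 hp1
  let c : Fin K → Fin n := Fin.castLE hKn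
  let X (z : NonHub c × Fin K) (ω : EdgeType n → Bool) : Bool := ω (hubEdge c z)
  have hX : iIndepFun X (erMeasure n p) :=
    iIndepFun_edgeIndicator.precomp (hubEdge_injective (Fin.castLE_injective hKn))
  have hXm (z) : Measurable (X z) := measurable_pi_apply _
  have hq (z) : (erMeasure n p).real {ω | X z ω = false} = 1 - p :=
    erMeasure_real_eq_false hp0.le hp1 _
  have hcover : {ω | (1 + 1 / p) * n + t + 2 * K ^ 2 < satNum (graphOf ω) (cycGraph 4)}
      ⊆ {ω | ∃ x, ∀ i, X (x, i) ω = false}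
        ∪ {ω | Fintype.card (NonHub c) * ((1 - p) / (1 - (1 - p))) + t
            ≤ ∑ x, (leadingFalse fun i => X (x, i) ω : ℝ)} := by
    intro ω hω
    contrapose! hω
    simp only [Set.mem_union, Set.mem_ofPred_eq, not_or, not_exists, not_forall,
      Bool.not_eq_false, not_le] at hω
    exact (satNum_graphOf_le_of_sum_leadingFalse_le hp0 hω.1 hω.2.le).not_gt
  calc (erMeasure n p).real {ω | (1 + 1 / p) * n + t + 2 * K ^ 2
          < satNum (graphOf ω) (cycGraph 4)}
      ≤ Fintype.card (NonHub c) * (1 - p) ^ K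
          + Fintype.card (NonHub c) * (K / 2) ^ 2 / t ^ 2 :=
        (measureReal_mono hcover).trans <| (measureReal_union_le _ _).trans <| add_le_add
          (measureReal_exists_forall_eq_false_le hX hq)
          (measureReal_sum_leadingFalse_ge_le hX hXm hq hq0 (sub_lt_self 1 hp0) ht)
    _ ≤ n * (1 - p) ^ K + n * (K / 2) ^ 2 / t ^ 2 := by
        have := card_nonHub_le c
        gcongr

end RandomGraph

lemma tendsto_nthRoot_atTop {k : ℕ} (hk : k ≠ 0) : Tendsto (Nat.nthRoot k) atTop atTop :=
  tendsto_atTop.2 fun b =>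
    (eventually_ge_atTop (b ^ k)).mono fun _ hb => (Nat.le_nthRoot_iff hk).2 hb

lemma tendsto_nthRoot_four_sq_div_atTop :
    Tendsto (fun n : ℕ => (Nat.nthRoot 4 n : ℝ) ^ 2 / n) atTop (nhds 0) := by
  have hsqrt : Tendsto (fun n : ℕ => (√(n : ℝ))⁻¹) atTop (nhds 0) :=
    tendsto_inv_atTop_zero.comp (Real.tendsto_sqrt_atTop.comp tendsto_natCast_atTop_atTop)
  refine squeeze_zero (fun n => by positivity) (fun n => ?_) hsqrt
  have hpow : ((Nat.nthRoot 4 n : ℝ) ^ 2) ^ 2 ≤ n := by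
    rw [← pow_mul]
    exact_mod_cast Nat.pow_nthRoot_le (Or.inl four_ne_zero)
  calc (Nat.nthRoot 4 n : ℝ) ^ 2 / n ≤ √n / n := by
        gcongr
        exact Real.le_sqrt_of_sq_le hpow
    _ = (√(n : ℝ))⁻¹ := Real.sqrt_div_self

lemma tendsto_mul_pow_nthRoot_four_atTop {q : ℝ} (hq0 : 0 ≤ q) (hq1 : q < 1) :
    Tendsto (fun n : ℕ => (n : ℝ) * q ^ Nat.nthRoot 4 n) atTop (nhds 0) := by
  have hgeom : Tendsto (fun n : ℕ => 16 * ((Nat.nthRoot 4 n : ℝ) ^ 4 * q ^ Nat.nthRoot 4 n))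
      atTop (nhds 0) := by
    simpa using ((tendsto_pow_const_mul_const_pow_of_abs_lt_one 4
      (abs_lt.2 ⟨by linarith, hq1⟩)).comp (tendsto_nthRoot_atTop four_ne_zero)).const_mul 16
  refine squeeze_zero' (Eventually.of_forall fun n => by positivity) ?_ hgeom
  filter_upwards [(tendsto_nthRoot_atTop four_ne_zero).eventually_ge_atTop 1] with n hK
  have hn : (n : ℝ) ≤ (2 * Nat.nthRoot 4 n) ^ 4 := by
    have : n ≤ (2 * Nat.nthRoot 4 n) ^ 4 := (Nat.lt_pow_nthRoot_add_one four_ne_zero n).le.trans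
      (Nat.pow_le_pow_left (by omega) 4)
    exact_mod_cast this
  calc (n : ℝ) * q ^ Nat.nthRoot 4 n
      ≤ (2 * Nat.nthRoot 4 n) ^ 4 * q ^ Nat.nthRoot 4 n := by gcongr
    _ = 16 * ((Nat.nthRoot 4 n : ℝ) ^ 4 * q ^ Nat.nthRoot 4 n) := by ring

theorem c4_saturation_upper_small_p_general {p : ℝ} (hp0 : 0 < p) (hp1 : p ≤ 1) {B : ℝ}
    (hB : 1 + 1 / p < B) :
    Tendsto (fun n : ℕ => erMeasure n p {ω | (satNum (graphOf ω) (cycGraph 4) : ℝ) ≤ B * n})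
      atTop (nhds 1) := by
  obtain ⟨δ, hδ, rfl⟩ : ∃ δ > 0, B = 1 + 1 / p + 2 * δ :=
    ⟨(B - (1 + 1 / p)) / 2, by linarith, by ring⟩
  set K : ℕ → ℕ := Nat.nthRoot 4
  have hbound : Tendsto (fun n : ℕ => n * (1 - p) ^ K n + (K n : ℝ) ^ 2 / n / (4 * δ ^ 2)) atTop
      (nhds 0) := by
    simpa using (tendsto_mul_pow_nthRoot_four_atTop (sub_nonneg.2 hp1) (sub_lt_self 1 hp0)).add
      (tendsto_nthRoot_four_sq_div_atTop.div_const (4 * δ ^ 2))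
  refine tendsto_measure_one_of_tendsto_measureReal_compl (fun n => (Set.toFinite _).measurableSet)
    (squeeze_zero' (Eventually.of_forall fun n => measureReal_nonneg) ?_ hbound)
  filter_upwards [eventually_gt_atTop 0,
    tendsto_nthRoot_four_sq_div_atTop.eventually_le_const (half_pos hδ)] with n hn hKn
  have hn' : (0 : ℝ) < n := Nat.cast_pos.2 hn
  have hK_le : K n ≤ n := (Nat.le_self_pow four_ne_zero _).trans
    (Nat.pow_nthRoot_le (Or.inl four_ne_zero))
  have hsmall : 2 * (K n : ℝ) ^ 2 ≤ δ * n := by linarith [(div_le_iff₀ hn').1 hKn]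
  calc _ ≤ (erMeasure n p).real {ω | (1 + 1 / p) * n + δ * n + 2 * K n ^ 2
          < satNum (graphOf ω) (cycGraph 4)} := by
        refine measureReal_mono fun ω hω => ?_
        rw [Set.mem_compl_iff, Set.mem_ofPred_eq, not_le] at hω
        rw [Set.mem_ofPred_eq]
        linarith
    _ ≤ n * (1 - p) ^ K n + n * (K n / 2) ^ 2 / (δ * n) ^ 2 :=
        erMeasure_real_lt_satNum_cycGraph_four_le hp0 hp1 hK_le (by positivity)
    _ = n * (1 - p) ^ K n + (K n : ℝ) ^ 2 / n / (4 * δ ^ 2) := by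
        field_simp
        ring

section Arithmetic

variable {p : ℝ} {s : ℕ}

lemma le_one_half_of_le_one_sub_inv_cbrt_seven
    (hp : p ≤ 1 - 1 / (7 : ℝ) ^ ((1 : ℝ) / 3)) : p ≤ 1 / 2 := by
  have hcbrt : (7 : ℝ) ^ ((1 : ℝ) / 3) ≤ 2 := by
    rw [one_div, Real.rpow_inv_le_iff_of_pos (by norm_num) (by norm_num) (by norm_num)]
    norm_num
  have : 1 / 2 ≤ 1 / (7 : ℝ) ^ ((1 : ℝ) / 3) := one_div_le_one_div_of_le (by positivity) hcbrt
  linarith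

lemma seven_le_of_mul_one_sub_pow_lt_one (hp : p ≤ 1 / 2)
    (hs : (2 * (s : ℝ) ^ 2 + 1) * (1 - p) ^ s < 1) : 7 ≤ s := by
  have hpow : (1 / 2 : ℝ) ^ s ≤ (1 - p) ^ s := by
    gcongr
    linarith
  by_contra! hlt
  have : (2 * (s : ℝ) ^ 2 + 1) * (1 / 2) ^ s < 1 :=
    (mul_le_mul_of_nonneg_left hpow (by positivity)).trans_lt hs
  interval_cases s <;> norm_num at this

-- If `(s + 1) / 2 ≤ 1 + 1 / p`, then `p s / (1 - p) ≤ 4`, so `(1 - p) ^ (-s) ≤ exp 4 < 99`.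
lemma one_add_one_div_lt_of_mul_one_sub_pow_lt_one (hp0 : 0 < p) (hp : p ≤ 1 / 2)
    (hs : (2 * (s : ℝ) ^ 2 + 1) * (1 - p) ^ s < 1) : 1 + 1 / p < ((s : ℝ) + 1) / 2 := by
  have hs7 : (7 : ℝ) ≤ s := by exact_mod_cast seven_le_of_mul_one_sub_pow_lt_one hp hs
  by_contra! hle
  have hps : p * (s - 1) ≤ 2 := by
    have := mul_le_mul_of_nonneg_left hle hp0.le
    rw [mul_add, mul_one_div_cancel hp0.ne'] at this
    linarith
  have hq : 0 < 1 - p := by linarith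
  have hp3 : p ≤ 1 / 3 := by nlinarith
  have hexponent : s * (p / (1 - p)) ≤ 4 := by
    rw [← mul_div_assoc, div_le_iff₀ hq]
    nlinarith
  have hinv : (1 - p)⁻¹ ≤ Real.exp (p / (1 - p)) := by
    calc (1 - p)⁻¹ = p / (1 - p) + 1 := by field_simp; ring
      _ ≤ Real.exp (p / (1 - p)) := Real.add_one_le_exp _
  have hlarge : 99 ≤ 2 * (s : ℝ) ^ 2 + 1 := by nlinarith
  have hsmall : 2 * (s : ℝ) ^ 2 + 1 ≤ 81 := by
    calc 2 * (s : ℝ) ^ 2 + 1 ≤ ((1 - p) ^ s)⁻¹ := by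
          rw [← one_div]
          exact ((lt_div_iff₀ (pow_pos hq s)).2 hs).le
      _ = (1 - p)⁻¹ ^ s := (inv_pow _ _).symm
      _ ≤ Real.exp (p / (1 - p)) ^ s := by gcongr
      _ = Real.exp (s * (p / (1 - p))) := (Real.exp_nat_mul _ _).symm
      _ ≤ Real.exp ((4 : ℕ) * 1) := Real.exp_le_exp.2 (by simpa using hexponent)
      _ = Real.exp 1 ^ 4 := Real.exp_nat_mul 1 4
      _ ≤ 3 ^ 4 := by gcongr; exact Real.exp_one_lt_three.le
      _ = 81 := by norm_num
  linarith

lemma one_add_one_div_lt_saturation_bound (hp0 : 0 < p)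
    (hp : p ≤ 1 - 1 / (7 : ℝ) ^ ((1 : ℝ) / 3)) (hs : (2 * (s : ℝ) ^ 2 + 1) * (1 - p) ^ s < 1) :
    1 + 1 / p < ((s : ℝ) + 1) / 2 + s * (1 - p) ^ s
      + s * (1 - p) ^ (2 * s) / (1 - (1 - p) ^ s) := by
  have hp2 : p ≤ 1 / 2 := le_one_half_of_le_one_sub_inv_cbrt_seven hp
  have hq0 : 0 ≤ 1 - p := by linarith
  have hpow : 0 ≤ 1 - (1 - p) ^ s := sub_nonneg.2 (pow_le_one₀ hq0 (sub_le_self 1 hp0.le))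
  calc 1 + 1 / p < ((s : ℝ) + 1) / 2 := one_add_one_div_lt_of_mul_one_sub_pow_lt_one hp0 hp2 hs
    _ ≤ ((s : ℝ) + 1) / 2 + (s * (1 - p) ^ s
          + s * (1 - p) ^ (2 * s) / (1 - (1 - p) ^ s)) := le_add_of_nonneg_right (by positivity)
    _ = _ := (add_assoc _ _ _).symm

end Arithmetic

end

/-- For fixed `p ∈ (0,1)` with `p ≤ 1 − 1/∛7`, and `s` the minimum
positive integer with `(2s²+1)(1−p)^s < 1`, whp
`sat(G(n,p), C_4) ≤ ((s+1)/2 + s(1−p)^s + s(1−p)^{2s}/(1−(1−p)^s))·n·(1+o(1))`. -/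
theorem c4_saturation_upper_small_p (p : ℝ) (hp0 : 0 < p) (hp1 : p < 1)
    (hp : p ≤ 1 - 1 / (7 : ℝ) ^ ((1 : ℝ) / 3)) (s : ℕ) (hs0 : 0 < s)
    (hs : (2 * (s : ℝ) ^ 2 + 1) * (1 - p) ^ s < 1)
    (hsmin : ∀ t : ℕ, 0 < t → (2 * (t : ℝ) ^ 2 + 1) * (1 - p) ^ t < 1 → s ≤ t)
    (ε : ℝ) (hε : 0 < ε) :
    Tendsto (fun n : ℕ =>
      erMeasure n p {ω |
        (satNum (graphOf ω) (cycGraph 4) : ℝ)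
          ≤ (((s : ℝ) + 1) / 2 + s * (1 - p) ^ s
              + s * (1 - p) ^ (2 * s) / (1 - (1 - p) ^ s)) * n * (1 + ε)})
      atTop (nhds 1) := by
  have hbound := one_add_one_div_lt_saturation_bound hp0 hp hs
  have hmargin := hbound.trans (lt_mul_of_one_lt_right (hbound.trans' (by positivity))
    (lt_add_of_pos_right 1 hε))
  simpa only [mul_right_comm _ _ (1 + ε)] using
    c4_saturation_upper_small_p_general hp0 hp1.le hmargin
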